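/- For any initial graph function α on a strongly connected directed graph G and any fair infinite sequence of balancing operations, the sequence α(t) of graph functions converges edgewise to a balanced graph function that is equivalent to α. -/

import Mathlib

open Filter Topology

variable {V : Type*}

/-- Maximum weight of an edge leaving `v` (as a supremum over the finite edge set). -/
noncomputable def outMax (E : V → V → Prop) (α : V → V → ℝ) (v : V) : ℝ :=
  sSup {x : ℝ | ∃ w, E v w ∧ x = α v w}

/-- Maximum weight of an edge entering `v`. -/
noncomputable def inMax (E : V → V → Prop) (α : V → V → ℝ) (v : V) : ℝ :=
  sSup {x : ℝ | ∃ u, E u v ∧ x = α u v}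

/-- A graph function is balanced if the max outgoing weight equals the max incoming
weight at every vertex. -/
def IsBalancedGF (E : V → V → Prop) (α : V → V → ℝ) : Prop :=
  ∀ v, outMax E α v = inMax E α v

/-- Raising imbalance at `v`. -/
noncomputable def rhoR (E : V → V → Prop) (α : V → V → ℝ) (v : V) : ℝ :=
  max 0 (outMax E α v - inMax E α v)

/-- Lowering imbalance at `v`. -/
noncomputable def rhoL (E : V → V → Prop) (α : V → V → ℝ) (v : V) : ℝ :=
  max 0 (inMax E α v - outMax E α v)

/-- A balancing operation at `v`: add `(α_v^out − α_v^in)/2` to every edge entering `v`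
and subtract the same quantity from every edge leaving `v` (a self-loop is unchanged). -/
noncomputable def balanceAt [DecidableEq V] (E : V → V → Prop) (α : V → V → ℝ) (v : V) :
    V → V → ℝ :=
  fun a b =>
    α a b + (if b = v then (outMax E α v - inMax E α v) / 2 else 0)
          - (if a = v then (outMax E α v - inMax E α v) / 2 else 0)

/-- A raising operation at `v`: balance at `v` if the raising imbalance is positive,
otherwise do nothing. -/
noncomputable def raiseOp [DecidableEq V] (E : V → V → Prop) (α : V → V → ℝ) (v : V) :
    V → V → ℝ :=
  if 0 < rhoR E α v then balanceAt E α v else α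

/-- A lowering operation at `v`: balance at `v` if the lowering imbalance is positive,
otherwise do nothing. -/
noncomputable def lowerOp [DecidableEq V] (E : V → V → Prop) (α : V → V → ℝ) (v : V) :
    V → V → ℝ :=
  if 0 < rhoL E α v then balanceAt E α v else α

/-- A sequence of vertices is fair if every vertex appears infinitely often. -/
def Fair (σ : ℕ → V) : Prop := ∀ (v : V) (N : ℕ), ∃ t, N ≤ t ∧ σ t = v

/-- State after `t` raising operations along the sequence `σ`. -/
noncomputable def raiseIter [DecidableEq V] (E : V → V → Prop) (α : V → V → ℝ)
    (σ : ℕ → V) : ℕ → V → V → ℝ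
  | 0 => α
  | t + 1 => raiseOp E (raiseIter E α σ t) (σ t)

/-- State after `t` lowering operations along the sequence `σ`. -/
noncomputable def lowerIter [DecidableEq V] (E : V → V → Prop) (α : V → V → ℝ)
    (σ : ℕ → V) : ℕ → V → V → ℝ
  | 0 => α
  | t + 1 => lowerOp E (lowerIter E α σ t) (σ t)

/-- The raising vector: cumulative amount by which each vertex has been raised after
`t` raising operations along `σ`. -/
noncomputable def rvec [DecidableEq V] (E : V → V → Prop) (α : V → V → ℝ)
    (σ : ℕ → V) : ℕ → V → ℝ
  | 0 => fun _ => 0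
  | t + 1 => fun u =>
      rvec E α σ t u + (if u = σ t then rhoR E (raiseIter E α σ t) (σ t) / 2 else 0)

/-- State after performing raising operations along a finite list of vertices. -/
noncomputable def raiseList [DecidableEq V] (E : V → V → Prop) :
    (V → V → ℝ) → List V → V → V → ℝ
  | α, [] => α
  | α, v :: l => raiseList E (raiseOp E α v) l

/-- Raising vector accumulated along a finite list of raising operations. -/
noncomputable def rvecList [DecidableEq V] (E : V → V → Prop) :
    (V → V → ℝ) → List V → V → ℝ
  | _, [] => fun _ => 0
  | α, v :: l => fun u =>
      (if u = v then rhoR E α v / 2 else 0) + rvecList E (raiseOp E α v) l u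

/-- State after performing (unconditional) balancing operations along a list. -/
noncomputable def balList [DecidableEq V] (E : V → V → Prop) :
    (V → V → ℝ) → List V → V → V → ℝ
  | α, [] => α
  | α, v :: l => balList E (balanceAt E α v) l

/-- State after `t` balancing operations along the sequence `σ`. -/
noncomputable def balIter [DecidableEq V] (E : V → V → Prop) (α : V → V → ℝ)
    (σ : ℕ → V) : ℕ → V → V → ℝ
  | 0 => α
  | t + 1 => balanceAt E (balIter E α σ t) (σ t)

/-- Two graph functions are equivalent if their sums around every directed cycle agree. -/
def Equivalent (E : V → V → Prop) (α γ : V → V → ℝ) : Prop :=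
  ∀ (k : ℕ) (f : ZMod (k + 1) → V), (∀ i, E (f i) (f (i + 1))) →
    (∑ i, α (f i) (f (i + 1))) = ∑ i, γ (f i) (f (i + 1))

/-- The raising-balanced graph function determined by the limiting raising vector. -/
noncomputable def alphaR (α : V → V → ℝ) (rstar : V → ℝ) : V → V → ℝ :=
  fun u v => α u v + rstar v - rstar u

/-- Height of a vertex: `y_v = -r*_v`. -/
noncomputable def height (rstar : V → ℝ) (v : V) : ℝ := -rstar v

/-- Level of a vertex: maximum over incoming edges of `α^R`. -/
noncomputable def level (E : V → V → Prop) (α : V → V → ℝ) (rstar : V → ℝ) (v : V) : ℝ :=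
  inMax E (alphaR α rstar) v

/-- Momentum of a vertex: `m_v = max over edges (u,v) entering v of (α_{uv} − x_v)`. -/
noncomputable def momentum (E : V → V → Prop) (α : V → V → ℝ) (rstar : V → ℝ) (v : V) : ℝ :=
  sSup {c : ℝ | ∃ u, E u v ∧ c = α u v - level E α rstar v}

/-!
Every iterate has the form `α u v + p t v - p t u`, and balancing at `v` replaces the potential of
`v` by half the sum of `max (α v w + p w)` and `min (p z - α z v)`, over arcs `v → w` and `z → v`.
If the potentials converge, the imbalances, being twice the increments, tend to `0` along the times
at which a given vertex is balanced, so the limit is balanced.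

For convergence, let `U` be the set of vertices whose potentials diverge, and contract its
complement to one vertex. Moving the potentials to a gauge that is optimal for the maximum cycle
mean, one may assume that no arc has positive weight and that every vertex is reachable from some
root in `U` by arcs of weight `0`. Then the potentials satisfy a maximum principle. The largest
weight of a walk of length `k` in the current graph function has a limit superior `L k` that is
convex in `k`: updating an end of a walk averages the bounds for the walk shortened and prolonged by
one arc at that end. A bounded convex sequence with `L 0 = 0` has `L 1 ≤ 0`, so asymptotically no
arc has positive weight, and the root, which reaches everything by arcs of weight `0`, has the
largest potential up to a vanishing error. By the maximum principle its potential can then rise only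
by a vanishing amount. Hence it converges, contradicting that the root lies in `U`.
-/

section RealSequences

lemma exists_pos_forall_add_mul_lt {ι : Type*} [Finite ι] (b c : ι → ℝ) (X : ℝ) :
    ∃ δ > 0, ∀ e, b e < X → b e + δ * c e < X := by
  have small : ∀ᶠ δ in 𝓝[>] (0 : ℝ), ∀ e, b e < X → b e + δ * c e < X := by
    refine eventually_all.2 fun e => ?_
    by_cases he : b e < X
    · have tends : Tendsto (fun δ : ℝ => b e + δ * c e) (𝓝[>] 0) (𝓝 (b e + 0 * c e)) :=
        Tendsto.mono_left (Continuous.tendsto (by fun_prop) 0) nhdsWithin_le_nhds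
      filter_upwards [tends.eventually_lt_const (by simpa using he)] with δ hδ _ using hδ
    · exact .of_forall fun _ h => absurd h he
  obtain ⟨δ, hlt, hpos⟩ := (small.and self_mem_nhdsWithin).exists
  exact ⟨δ, hpos, hlt⟩

lemma antitone_of_midpoint_le_of_bddAbove {f : ℕ → ℝ}
    (hconv : ∀ k, 2 * f (k + 1) ≤ f k + f (k + 2)) (hbdd : BddAbove (Set.range f)) :
    Antitone f := by
  refine antitone_nat_of_succ_le fun k => not_lt.1 fun hlt => ?_
  have slope (j : ℕ) : f (k + 1) - f k ≤ f (k + j + 1) - f (k + j) := by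
    induction j with
    | zero => rfl
    | succ j ih =>
      have : 2 * f (k + j + 1) ≤ f (k + j) + f (k + (j + 1) + 1) := hconv (k + j)
      rw [← add_assoc k j 1] at this ⊢
      linarith
  have linear_growth (j : ℕ) : f k + j * (f (k + 1) - f k) ≤ f (k + j) := by
    induction j with
    | zero => simp
    | succ j ih =>
      rw [← add_assoc k j 1]
      push_cast
      linarith [slope j]
  obtain ⟨C, hC⟩ := hbdd
  obtain ⟨j, hj⟩ := exists_nat_gt ((C - f k) / (f (k + 1) - f k))
  rw [div_lt_iff₀ (sub_pos.2 hlt)] at hj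
  linarith [linear_growth j, hC ⟨k + j, rfl⟩]

lemma exists_tendsto_of_eventually_forall_le_add {f : ℕ → ℝ}
    (habove : BddAbove (Set.range f)) (hbelow : BddBelow (Set.range f))
    (h : ∀ ε > 0, ∀ᶠ s in atTop, ∀ t ≥ s, f t ≤ f s + ε) :
    ∃ L, Tendsto f atTop (𝓝 L) := by
  refine tendsto_of_no_upcrossings dense_univ (fun b _ c _ hbc ⟨hlow, hhigh⟩ => ?_)
    habove.isBoundedUnder_of_range hbelow.isBoundedUnder_of_range
  obtain ⟨s, hs, hstep⟩ := (hlow.and_eventually (h (c - b) (sub_pos.2 hbc))).exists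
  obtain ⟨t, ht, hst⟩ := (hhigh.and_eventually (eventually_ge_atTop s)).exists
  linarith [hstep t hst]

lemma eventually_of_frequently_of_step {Q R : ℕ → Prop} (hR : ∃ᶠ t in atTop, R t)
    (hset : ∀ᶠ t in atTop, R t → Q (t + 1))
    (hkeep : ∀ᶠ t in atTop, ¬R t → Q t → Q (t + 1)) :
    ∀ᶠ t in atTop, Q t := by
  obtain ⟨N, hN⟩ := eventually_atTop.1 (hset.and hkeep)
  obtain ⟨s, hsN, hRs⟩ := frequently_atTop.1 hR N
  refine eventually_atTop.2 ⟨s + 1, fun t ht => ?_⟩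
  induction t, ht using Nat.le_induction with
  | base => exact (hN s hsN).1 hRs
  | succ t ht ih =>
    have htN : N ≤ t := by lia
    exact (em (R t)).elim (hN t htN).1 fun hRt => (hN t htN).2 hRt ih

end RealSequences

section FeasiblePotentials

/-- Feasibility of a potential `h` at level `X`: raising every vertex `v` by `h v` brings all arc
weights of `E` down to at most `X`, and `h` agrees on any two vertices related by `J`. Thus `J`
encodes a contraction of the graph without passing to a quotient. -/
def IsFeasible (E J : V → V → Prop) (a : V → V → ℝ) (X : ℝ) (h : V → ℝ) : Prop :=
  (∀ u v, E u v → a u v + h v - h u ≤ X) ∧ ∀ u v, J u v → h u = h v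

/-- The critical level of a weighted graph, i.e. the least level at which a feasible potential
exists; it is the maximum cycle mean of the contracted graph. -/
def IsCriticalLevel (E J : V → V → Prop) (a : V → V → ℝ) (X : ℝ) : Prop :=
  IsLeast {X | ∃ h, IsFeasible E J a X h} X

/-- A step of the tight subgraph of a feasible potential `h` at level `X`: an arc of `E` whose
weight becomes exactly `X`, or a move between two contracted vertices. -/
def TightStep (E J : V → V → Prop) (a : V → V → ℝ) (X : ℝ) (h : V → ℝ) (u v : V) : Prop :=
  (E u v ∧ a u v + h v - h u = X) ∨ J u v

variable {E J : V → V → Prop} {a : V → V → ℝ} {X : ℝ} {h h' : V → ℝ}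

lemma IsFeasible.mono {Y : ℝ} (hh : IsFeasible E J a X h) (hXY : X ≤ Y) : IsFeasible E J a Y h :=
  ⟨fun u v huv => (hh.1 u v huv).trans hXY, hh.2⟩

lemma IsFeasible.sub_const (hh : IsFeasible E J a X h) (c : ℝ) :
    IsFeasible E J a X fun v => h v - c :=
  ⟨fun u v huv => by linarith [hh.1 u v huv], fun u v huv => congrArg (· - c) (hh.2 u v huv)⟩

lemma exists_forall_isFeasible_sub_le
    {u v : V} (huv : Relation.ReflTransGen (fun u v => E u v ∨ J u v) u v)
    (a : V → V → ℝ) (X : ℝ) : ∃ C, ∀ h, IsFeasible E J a X h → h v - h u ≤ C := by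
  induction huv with
  | refl => exact ⟨0, fun h _ => (sub_self _).le⟩
  | @tail v w _ hvw ih =>
    obtain ⟨C, hC⟩ := ih
    rcases hvw with hvw | hvw
    · exact ⟨C + X - a v w, fun h hh => by linarith [hC h hh, hh.1 v w hvw]⟩
    · exact ⟨C, fun h hh => hh.2 v w hvw ▸ hC h hh⟩

lemma isCompact_setOf_isFeasible
    (hconn : ∀ u v, Relation.ReflTransGen (fun u v => E u v ∨ J u v) u v)
    (a : V → V → ℝ) (X : ℝ) (r : V) : IsCompact {h | h r = 0 ∧ IsFeasible E J a X h} := by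
  choose C hC using fun u v => exists_forall_isFeasible_sub_le (hconn u v) a X
  refine (isCompact_univ_pi fun v => isCompact_Icc (a := -C v r) (b := C r v)).of_isClosed_subset
    ?_ ?_
  · simp only [IsFeasible, Set.ofPred_and, Set.ofPred_forall]
    refine (isClosed_eq (by fun_prop) (by fun_prop)).inter (.inter ?_ ?_)
    · exact isClosed_iInter fun u => isClosed_iInter fun v => isClosed_iInter fun _ =>
        isClosed_le (by fun_prop) (by fun_prop)
    · exact isClosed_iInter fun u => isClosed_iInter fun v => isClosed_iInter fun _ =>
        isClosed_eq (by fun_prop) (by fun_prop)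
  · rintro h ⟨hr, hh⟩ v -
    constructor <;> linarith [hC v r h hh, hC r v h hh]

lemma exists_isCriticalLevel [Finite V] (harc : ∃ u v, E u v)
    (hconn : ∀ u v, Relation.ReflTransGen (fun u v => E u v ∨ J u v) u v) (a : V → V → ℝ) :
    ∃ X, IsCriticalLevel E J a X := by
  classical
  have := Fintype.ofFinite V
  obtain ⟨r, v, hrv⟩ := harc
  set A : Finset (V × V) := {e | E e.1 e.2}
  have hA : A.Nonempty := ⟨(r, v), by simpa [A] using hrv⟩
  set f : (V → ℝ) → ℝ := fun h => A.sup' hA fun e => a e.1 e.2 + h e.2 - h e.1 with hf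
  have le_iff {X h} : f h ≤ X ↔ ∀ u v, E u v → a u v + h v - h u ≤ X := by
    simp [hf, A]
  obtain ⟨h, ⟨-, hh⟩, hmin⟩ := (isCompact_setOf_isFeasible hconn a (f 0) r).exists_isMinOn
    ⟨0, rfl, le_iff.1 le_rfl, fun _ _ _ => rfl⟩
    (Continuous.finset_sup'_apply hA fun e _ => by fun_prop : Continuous f).continuousOn
  refine ⟨f h, ⟨h, le_iff.1 le_rfl, hh.2⟩, fun X ⟨h', hh'⟩ => ?_⟩
  rcases le_total (f 0) X with hX | hX
  · exact (le_iff.2 hh.1).trans hX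
  · have normalized := hh'.sub_const (h' r)
    exact (hmin ⟨sub_self _, normalized.mono hX⟩).trans (le_iff.2 normalized.1)

lemma IsCriticalLevel.exists_le [Finite V] (hX : IsCriticalLevel E J a X)
    (hJ : ∀ u v, J u v → h u = h v) : ∃ u v, E u v ∧ X ≤ a u v + h v - h u := by
  by_contra! hlt
  obtain ⟨ε, hε, hgap⟩ := exists_pos_forall_add_mul_lt
    (fun e : V × V => a e.1 e.2 + h e.2 - h e.1) 1 X
  have := hX.2 ⟨h, fun u v huv => le_sub_iff_add_le.2
    (by simpa using (hgap (u, v) (hlt u v huv)).le), hJ⟩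
  linarith

/-- Otherwise the number of vertices reachable by tight steps drops along every tight arc, and
raising each vertex by a small multiple of it makes all arcs fall below the critical level. -/
lemma IsCriticalLevel.exists_tight_cycle [Finite V] (hX : IsCriticalLevel E J a X)
    (hJ : ∀ u v, J u v → J v u) (hh : IsFeasible E J a X h) :
    ∃ u v, E u v ∧ a u v + h v - h u = X ∧ Relation.ReflTransGen (TightStep E J a X h) v u := by
  by_contra! hacyclic
  set reach : V → Set V := fun v => {w | Relation.ReflTransGen (TightStep E J a X h) v w}
  have reach_anti {u v} (huv : TightStep E J a X h u v) : reach v ⊆ reach u :=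
    fun w hvw => .head huv hvw
  obtain ⟨δ, hδ, hslack⟩ := exists_pos_forall_add_mul_lt
    (fun e : V × V => a e.1 e.2 + h e.2 - h e.1)
    (fun e => (reach e.2).ncard - (reach e.1).ncard) X
  obtain ⟨u, v, huv, hle⟩ := hX.exists_le (h := fun v => h v + δ * (reach v).ncard)
    fun u v huv => by
      rw [hh.2 u v huv, (reach_anti (.inr (hJ u v huv))).antisymm (reach_anti (.inr huv))]
  rcases (hh.1 u v huv).lt_or_eq with hlt | htight
  · linarith [hslack (u, v) hlt]
  · have : (reach v).ncard < (reach u).ncard := Set.ncard_lt_ncard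
      ⟨reach_anti (.inl ⟨huv, htight⟩), fun hsub => hacyclic u v huv htight (hsub .refl)⟩
    have : ((reach v).ncard : ℝ) < (reach u).ncard := mod_cast this
    nlinarith

lemma IsFeasible.sub_le_sub_of_reflTransGen {u v : V} (hh : IsFeasible E J a X h)
    (hh' : IsFeasible E J a X h') (huv : Relation.ReflTransGen (TightStep E J a X h) u v) :
    h' v - h v ≤ h' u - h u := by
  induction huv with
  | refl => rfl
  | @tail v w _ hvw ih =>
    rcases hvw with ⟨hvw, htight⟩ | hvw
    · linarith [hh'.1 v w hvw]
    · rwa [← hh.2 v w hvw, ← hh'.2 v w hvw]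

/-- Among the feasible potentials vanishing at `r`, one with the largest sum works: all vertices
that are not reachable from `r` by tight steps could be raised simultaneously. -/
lemma IsFeasible.exists_reachable [Finite V] (hJ : ∀ u v, J u v → J v u)
    (hconn : ∀ u v, Relation.ReflTransGen (fun u v => E u v ∨ J u v) u v)
    (hh : IsFeasible E J a X h) (r : V) :
    ∃ h', IsFeasible E J a X h' ∧ ∀ v, Relation.ReflTransGen (TightStep E J a X h') r v := by
  classical
  have := Fintype.ofFinite V
  obtain ⟨m, ⟨hmr, hm⟩, hmax⟩ := (isCompact_setOf_isFeasible hconn a X r).exists_isMaxOn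
    ⟨_, sub_self _, hh.sub_const (h r)⟩
    (by fun_prop : Continuous fun h : V → ℝ => ∑ v, h v).continuousOn
  refine ⟨m, hm, fun w => by_contra fun hw => ?_⟩
  set reach : V → Prop := Relation.ReflTransGen (TightStep E J a X m) r
  set φ : V → ℝ := fun v => if reach v then 0 else 1
  have φ_le {u v} (huv : TightStep E J a X m u v) : φ v ≤ φ u := by
    have : reach u → reach v := fun hu => hu.tail huv
    grind
  obtain ⟨δ, hδ, hslack⟩ := exists_pos_forall_add_mul_lt
    (fun e : V × V => a e.1 e.2 + m e.2 - m e.1) (fun e => φ e.2 - φ e.1) X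
  have raised : IsFeasible E J a X fun v => m v + δ * φ v := by
    refine ⟨fun u v huv => ?_, fun u v huv => ?_⟩
    · rcases (hm.1 u v huv).lt_or_eq with hlt | htight
      · linarith [hslack (u, v) hlt]
      · nlinarith [φ_le (.inl ⟨huv, htight⟩)]
    · simp only [hm.2 u v huv, (φ_le (.inr huv)).antisymm (φ_le (.inr (hJ u v huv)))]
  have φ_r : φ r = 0 := if_pos .refl
  have hle : ∑ v, (m v + δ * φ v) ≤ ∑ v, m v := hmax ⟨by simp [φ_r, hmr], raised⟩
  refine hle.not_gt (Finset.sum_lt_sum (fun v _ => ?_) ⟨w, Finset.mem_univ w, ?_⟩)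
  · have : 0 ≤ φ v := by grind
    nlinarith
  · have : φ w = 1 := if_neg hw
    nlinarith

lemma IsCriticalLevel.exists_root [Finite V] (hX : IsCriticalLevel E J a X)
    (hJ : ∀ u v, J u v → J v u)
    (hconn : ∀ u v, Relation.ReflTransGen (fun u v => E u v ∨ J u v) u v) :
    ∃ h u v, IsFeasible E J a X h ∧ E u v ∧ a u v + h v - h u = X ∧
      ∀ w, Relation.ReflTransGen (TightStep E J a X h) v w := by
  obtain ⟨h₀, hh₀⟩ := hX.1
  obtain ⟨u, v, huv, htight, hcycle⟩ := hX.exists_tight_cycle hJ hh₀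
  obtain ⟨h, hh, hreach⟩ := hh₀.exists_reachable hJ hconn v
  exact ⟨h, u, v, hh, huv, (hh.1 u v huv).antisymm
    (by linarith [hh₀.sub_le_sub_of_reflTransGen hh hcycle]), hreach⟩

end FeasiblePotentials

section CriticalGauge

/-- The arcs of `E` with at least one endpoint in `U`. -/
def IncidentArc (E : V → V → Prop) (U : Set V) (u v : V) : Prop := E u v ∧ (u ∈ U ∨ v ∈ U)

/-- The change of gauge sending a weight function `a` and a potential `p` to `gaugeWeight a X h`
and `p - h`: the reference point of the potentials moves to `h` and all weights drop by `X`. The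
balancing dynamics is invariant under it. -/
def gaugeWeight (a : V → V → ℝ) (X : ℝ) (h : V → ℝ) (u v : V) : ℝ := a u v + h v - h u - X

/-- A weight function in critical gauge relative to `U`, with root `r`: no arc incident to `U` has
positive weight, every vertex of `U` is entered by an arc of weight zero, and all vertices are
reachable from `r` by arcs of weight zero, where the complement of `U` counts as one vertex. -/
structure IsCriticalGauge (E : V → V → Prop) (U : Set V) (a : V → V → ℝ) (r : V) : Prop where
  nonpos : ∀ u v, IncidentArc E U u v → a u v ≤ 0
  exists_tight : ∀ v ∈ U, ∃ u, E u v ∧ a u v = 0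
  reachable : ∀ v, Relation.ReflTransGen
    (fun u v => (IncidentArc E U u v ∧ a u v = 0) ∨ (u ∉ U ∧ v ∉ U)) r v

variable [Finite V] {E : V → V → Prop} {U : Set V}

lemma exists_isCriticalGauge (hout : ∀ v, ∃ w, E v w)
    (hconn : ∀ u v, Relation.ReflTransGen E u v) (hU : U.Nonempty) (a : V → V → ℝ) :
    ∃ X h, (∀ u ∉ U, ∀ v ∉ U, h u = h v) ∧ ∃ r ∈ U, IsCriticalGauge E U (gaugeWeight a X h) r := by
  set J : V → V → Prop := fun u v => u ∉ U ∧ v ∉ U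
  have conn (u v : V) : Relation.ReflTransGen (fun u v => IncidentArc E U u v ∨ J u v) u v :=
    Relation.ReflTransGen.mono (fun u v huv => by grind [IncidentArc]) u v (hconn u v)
  obtain ⟨X, hX⟩ := exists_isCriticalLevel (J := J)
    (hU.elim fun u hu => (hout u).elim fun v huv => ⟨u, v, huv, .inl hu⟩) conn a
  obtain ⟨h, u, v, hh, ⟨huv, hmeets⟩, htight, hreach⟩ :=
    hX.exists_root (fun u v huv => ⟨huv.2, huv.1⟩) conn
  have exists_tight (w : V) (hw : w ∈ U) : ∃ z, E z w ∧ a z w + h w - h z = X := by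
    rcases (hreach w).cases_tail with rfl | ⟨z, -, ⟨hzw, hz⟩ | hzw⟩
    · exact ⟨u, huv, htight⟩
    · exact ⟨z, hzw.1, hz⟩
    · exact absurd hw hzw.2
  obtain ⟨r, hr, hroot⟩ :
      ∃ r ∈ U, Relation.ReflTransGen (TightStep (IncidentArc E U) J a X h) r v := by
    by_cases hv : v ∈ U
    · exact ⟨v, hv, .refl⟩
    · exact ⟨u, hmeets.resolve_right hv, .single (.inl ⟨⟨huv, hmeets⟩, htight⟩)⟩
  refine ⟨X, h, fun u hu v hv => hh.2 u v ⟨hu, hv⟩, r, hr, ?_, ?_, fun w => ?_⟩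
  · exact fun u v huv => sub_nonpos.2 (hh.1 u v huv)
  · simpa only [gaugeWeight, sub_eq_zero] using exists_tight
  · simpa only [gaugeWeight, sub_eq_zero] using! hroot.trans (hreach w)

lemma exists_isCriticalGauge_of_potential (hout : ∀ v, ∃ w, E v w)
    (hconn : ∀ u v, Relation.ReflTransGen E u v) (hU : U.Nonempty) (a : V → V → ℝ) (P : V → ℝ) :
    ∃ X h ℓ, (∀ v ∉ U, P v - h v = ℓ) ∧ ∃ r ∈ U, IsCriticalGauge E U (gaugeWeight a X h) r := by
  obtain ⟨X, h, hh, r, hr, hcrit⟩ := exists_isCriticalGauge hout hconn hU (gaugeWeight a 0 P)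
  obtain ⟨ℓ, hℓ⟩ : ∃ ℓ, ∀ w ∉ U, -h w = ℓ := by
    by_cases hne : ∃ w, w ∉ U
    · obtain ⟨w, hw⟩ := hne
      exact ⟨-h w, fun z hz => congrArg _ (hh z hz w hw)⟩
    · exact ⟨0, fun w hw => absurd ⟨w, hw⟩ hne⟩
  have gauge_add : gaugeWeight (gaugeWeight a 0 P) X h = gaugeWeight a X fun v => P v + h v := by
    ext u v
    simp only [gaugeWeight]
    ring
  exact ⟨X, fun v => P v + h v, ℓ, fun w hw => by simp [hℓ w hw], r, hr, gauge_add ▸ hcrit⟩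

end CriticalGauge

section BalancingDynamics

/-- The upper half of the balancing rule at a vertex `v`: up to the error `η`, the new value `m` at
`v` is at most the mean of the largest `a v w + y w` and the smallest `y z - a z v`, over arcs
`v → w` and `z → v`. Reversing all arcs and negating all values gives the lower half. -/
def LeMidpoint (E : V → V → Prop) (a : V → V → ℝ) (y : V → ℝ) (v : V) (m η : ℝ) : Prop :=
  ∃ w, E v w ∧ ∀ z, E z v → 2 * m ≤ a v w + y w + (y z - a z v) + η

/-- A trajectory `p` of potentials that realizes balancing operations along `σ`: when the current
weights are `a u v + p t v - p t u`, balancing at `σ t` moves its potential to the midpoint of the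
two extremes in `LeMidpoint`. The two halves of this rule are separate fields, the second being the
first for the reversed graph, so that every one-sided statement about `p` dualizes. -/
structure IsBalancingPotential (E : V → V → Prop) (a : V → V → ℝ) (σ : ℕ → V)
    (p : ℕ → V → ℝ) : Prop where
  stay : ∀ t v, v ≠ σ t → p (t + 1) v = p t v
  le_midpoint : ∀ t, LeMidpoint E a (p t) (σ t) (p (t + 1) (σ t)) 0
  midpoint_le : ∀ t,
    LeMidpoint (Function.swap E) (Function.swap a) (-p t) (σ t) (-p (t + 1) (σ t)) 0

variable {E : V → V → Prop} {a : V → V → ℝ} {σ : ℕ → V} {p : ℕ → V → ℝ} {U : Set V} {r : V}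

namespace IsBalancingPotential

lemma swap (hp : IsBalancingPotential E a σ p) :
    IsBalancingPotential (Function.swap E) (Function.swap a) σ (-p) where
  stay t v hv := congrArg _ (hp.stay t v hv)
  le_midpoint := hp.midpoint_le
  midpoint_le t := by simpa using! hp.le_midpoint t

lemma gauge (hp : IsBalancingPotential E a σ p) (X : ℝ) (h : V → ℝ) :
    IsBalancingPotential E (gaugeWeight a X h) σ fun t => p t - h where
  stay t v hv := congrArg (· - h v) (hp.stay t v hv)
  le_midpoint t := by
    obtain ⟨w, hw, hle⟩ := hp.le_midpoint t
    refine ⟨w, hw, fun z hz => ?_⟩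
    simp only [gaugeWeight, Pi.sub_apply]
    linarith [hle z hz]
  midpoint_le t := by
    obtain ⟨w, hw, hle⟩ := hp.midpoint_le t
    refine ⟨w, hw, fun z hz => ?_⟩
    have := hle z hz
    simp only [gaugeWeight, Function.swap, Pi.neg_apply, Pi.sub_apply] at this ⊢
    linarith

lemma le_of_isCriticalGauge (hp : IsBalancingPotential E a σ p) (ha : IsCriticalGauge E U a r)
    {s : ℕ} {B : ℝ} (hstart : ∀ v, p s v ≤ B) (hoff : ∀ t ≥ s, ∀ v ∉ U, p t v ≤ B) :
    ∀ t ≥ s, ∀ v, p t v ≤ B := by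
  intro t ht
  induction t, ht using Nat.le_induction with
  | base => exact hstart
  | succ t ht ih =>
    intro v
    by_cases hvU : v ∉ U
    · exact hoff (t + 1) (by lia) v hvU
    by_cases hv : v = σ t
    · subst hv
      obtain ⟨w, hw, hle⟩ := hp.le_midpoint t
      obtain ⟨z, hz, htight⟩ := ha.exists_tight (σ t) (not_not.1 hvU)
      linarith [hle z hz, ih w, ih z, ha.nonpos (σ t) w ⟨hw, .inl (not_not.1 hvU)⟩]
    · exact hp.stay t v hv ▸ ih v

lemma bddAbove_range [Finite V] (hp : IsBalancingPotential E a σ p) (hout : ∀ v, ∃ w, E v w)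
    (hconn : ∀ u v, Relation.ReflTransGen E u v) (v : V) : BddAbove (Set.range (p · v)) := by
  obtain ⟨X, h, -, r, -, hcrit⟩ := exists_isCriticalGauge hout hconn ⟨v, Set.mem_univ v⟩ a
  obtain ⟨B, hB⟩ := Set.finite_range (p 0 - h) |>.bddAbove
  refine ⟨B + h v, Set.forall_mem_range.2 fun t => ?_⟩
  have := (hp.gauge X h).le_of_isCriticalGauge hcrit (s := 0) (fun w => hB ⟨w, rfl⟩)
    (fun _ _ w hw => absurd (Set.mem_univ w) hw) t (Nat.zero_le t) v
  exact sub_le_iff_le_add.1 this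

lemma bddBelow_range [Finite V] (hp : IsBalancingPotential E a σ p) (hin : ∀ v, ∃ u, E u v)
    (hconn : ∀ u v, Relation.ReflTransGen E u v) (v : V) : BddBelow (Set.range (p · v)) := by
  obtain ⟨B, hB⟩ := hp.swap.bddAbove_range hin
    (fun u v => Relation.reflTransGen_swap.2 (hconn v u)) v
  exact ⟨-B, Set.forall_mem_range.2 fun t => neg_le.1 (hB ⟨t, rfl⟩)⟩

lemma exists_forall_abs_le [Finite V] (hp : IsBalancingPotential E a σ p)
    (hout : ∀ v, ∃ w, E v w) (hin : ∀ v, ∃ u, E u v)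
    (hconn : ∀ u v, Relation.ReflTransGen E u v) : ∃ D, ∀ t v, |p t v| ≤ D := by
  choose B hB using fun v => hp.bddAbove_range hout hconn v
  choose b hb using fun v => hp.bddBelow_range hin hconn v
  obtain ⟨D, hD⟩ := (Set.finite_range fun v => max |b v| |B v|).bddAbove
  exact ⟨D, fun t v => (abs_le_max_abs_abs (hb v ⟨t, rfl⟩) (hB v ⟨t, rfl⟩)).trans (hD ⟨v, rfl⟩)⟩

end IsBalancingPotential

end BalancingDynamics

section WalkExcess

/-- `HasWalk E a k u v b` says that some walk along `k` arcs of `E` from `u` to `v` has total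
weight `b`. -/
inductive HasWalk (E : V → V → Prop) (a : V → V → ℝ) : ℕ → V → V → ℝ → Prop
  | nil (u : V) : HasWalk E a 0 u u 0
  | snoc {k : ℕ} {u v w : V} {b : ℝ} (h : HasWalk E a k u v b) (hvw : E v w) :
      HasWalk E a (k + 1) u w (b + a v w)

/-- Every walk of length `k` has total weight at most `c` after raising each vertex `v` by `y v`. -/
def WalkBound (E : V → V → Prop) (a : V → V → ℝ) (y : V → ℝ) (k : ℕ) (c : ℝ) : Prop :=
  ∀ u v b, HasWalk E a k u v b → b + y v - y u ≤ c

variable {E : V → V → Prop} {a : V → V → ℝ} {y y' : V → ℝ} {k : ℕ} {u v : V} {b : ℝ}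

namespace HasWalk

lemma cons {w : V} (huv : E u v) (h : HasWalk E a k v w b) :
    HasWalk E a (k + 1) u w (a u v + b) := by
  induction h with
  | nil => simpa using (nil u).snoc huv
  | snoc _ hvw ih => simpa only [add_assoc] using (ih huv).snoc hvw

lemma swap (h : HasWalk E a k u v b) :
    HasWalk (Function.swap E) (Function.swap a) k v u b := by
  induction h with
  | nil u => exact nil u
  | @snoc k u v w b _ hvw ih => simpa only [add_comm] using! ih.cons (u := w) hvw

lemma nonpos (ha : ∀ u v, E u v → a u v ≤ 0) (h : HasWalk E a k u v b) : b ≤ 0 := by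
  induction h with
  | nil => rfl
  | snoc _ hvw ih => exact add_nonpos ih (ha _ _ hvw)

end HasWalk

namespace WalkBound

lemma mono {c d : ℝ} (h : WalkBound E a y k c) (hcd : c ≤ d) : WalkBound E a y k d :=
  fun u v b hb => (h u v b hb).trans hcd

lemma swap {c : ℝ} (h : WalkBound E a y k c) :
    WalkBound (Function.swap E) (Function.swap a) (-y) k c := fun u v b hb => by
  have := h v u b hb.swap
  simp only [Pi.neg_apply]
  linarith

end WalkBound

/-- Averages the bounds for the walk without its last arc and for the walk extended by an arc. -/
lemma LeMidpoint.walk_le {m : ℕ} {c₁ c₂ η : ℝ} (hmid : LeMidpoint E a y v (y' v) η)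
    (h₁ : WalkBound E a y m c₁) (h₂ : WalkBound E a y (m + 2) c₂) (hu : y' u = y u)
    (hb : HasWalk E a (m + 1) u v b) : b + y' v - y' u ≤ (c₁ + c₂ + η) / 2 := by
  obtain ⟨w, hvw, hle⟩ := hmid
  have hlong := h₂ u w _ (hb.snoc hvw)
  obtain _ | @⟨_, _, z, _, b₀, hshort, hzv⟩ := hb
  linarith [h₁ u z b₀ hshort, hle z hzv]

end WalkExcess

section AsymptoticDynamics

lemma Fair.frequently_eq {σ : ℕ → V} (hσ : Fair σ) (v : V) : ∃ᶠ t in atTop, σ t = v :=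
  frequently_atTop.2 (hσ v)

/-- The limit superior, as `t → ∞`, of the largest weight of a walk of length `k` after raising each
vertex `v` by `y t v`. It is truncated below at `0`, which also keeps the infimum away from its junk
value if there is no such walk. -/
noncomputable def limitExcess (E : V → V → Prop) (a : V → V → ℝ) (y : ℕ → V → ℝ) (k : ℕ) : ℝ :=
  sInf {c | 0 ≤ c ∧ ∀ᶠ t in atTop, WalkBound E a (y t) k c}

/-- A trajectory `y` of potentials that realizes balancing operations at the vertices of `U` up to
vanishing errors, for nonpositive weights and with bounded potential differences. Off `U` all
potentials are frozen at a common value. -/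
structure IsAsymptoticBalancing (E : V → V → Prop) (U : Set V) (a : V → V → ℝ) (σ : ℕ → V)
    (y : ℕ → V → ℝ) : Prop where
  nonpos : ∀ u v, E u v → a u v ≤ 0
  bounded : ∃ D, ∀ t u v, y t v - y t u ≤ D
  eq_off : ∀ t, ∀ u ∉ U, ∀ v ∉ U, y t u = y t v
  stay : ∀ t v, (v ∈ U → v ≠ σ t) → y (t + 1) v = y t v
  le_midpoint : ∀ η > 0, ∀ᶠ t in atTop, σ t ∈ U →
    LeMidpoint E a (y t) (σ t) (y (t + 1) (σ t)) η
  midpoint_le : ∀ η > 0, ∀ᶠ t in atTop, σ t ∈ U →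
    LeMidpoint (Function.swap E) (Function.swap a) (-y t) (σ t) (-y (t + 1) (σ t)) η

variable {E : V → V → Prop} {U : Set V} {a : V → V → ℝ} {σ : ℕ → V} {y : ℕ → V → ℝ}

lemma limitExcess_le {k : ℕ} {c : ℝ} (hc : 0 ≤ c) (h : ∀ᶠ t in atTop, WalkBound E a (y t) k c) :
    limitExcess E a y k ≤ c :=
  csInf_le (s := {c | 0 ≤ c ∧ _}) ⟨0, fun _ hc => hc.1⟩ ⟨hc, h⟩

lemma limitExcess_nonneg (k : ℕ) : 0 ≤ limitExcess E a y k :=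
  Real.sInf_nonneg fun _ hc => hc.1

lemma limitExcess_zero_le : limitExcess E a y 0 ≤ 0 :=
  limitExcess_le le_rfl (.of_forall fun _ u v b hb => by cases hb; simp)

namespace IsAsymptoticBalancing

lemma exists_forall_walkBound (hy : IsAsymptoticBalancing E U a σ y) :
    ∃ D ≥ 0, ∀ k, ∀ᶠ t in atTop, WalkBound E a (y t) k D := by
  obtain ⟨D, hD⟩ := hy.bounded
  refine ⟨max D 0, le_max_right _ _, fun k => .of_forall fun t u v b hb => ?_⟩
  linarith [hb.nonpos hy.nonpos, hD t u v, le_max_left D 0]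

lemma eventually_walkBound (hy : IsAsymptoticBalancing E U a σ y) {k : ℕ} {c : ℝ}
    (hc : limitExcess E a y k < c) : ∀ᶠ t in atTop, WalkBound E a (y t) k c := by
  obtain ⟨D, hD, hbound⟩ := hy.exists_forall_walkBound
  have nonempty : {c | 0 ≤ c ∧ ∀ᶠ t in atTop, WalkBound E a (y t) k c}.Nonempty :=
    ⟨D, hD, hbound k⟩
  obtain ⟨d, ⟨-, hd⟩, hdc⟩ := exists_lt_of_csInf_lt nonempty hc
  exact hd.mono fun t ht => ht.mono hdc.le

lemma eventually_walkBound_succ [Finite V] (hy : IsAsymptoticBalancing E U a σ y) (hσ : Fair σ)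
    {k : ℕ} {c₁ c₂ c : ℝ} (h₁ : ∀ᶠ t in atTop, WalkBound E a (y t) k c₁)
    (h₂ : ∀ᶠ t in atTop, WalkBound E a (y t) (k + 2) c₂) (hc : 0 ≤ c) (hlt : (c₁ + c₂) / 2 < c) :
    ∀ᶠ t in atTop, WalkBound E a (y t) (k + 1) c := by
  refine eventually_all.2 fun u => eventually_all.2 fun v => ?_
  by_cases hfixed : u = v ∨ (u ∉ U ∧ v ∉ U)
  · refine .of_forall fun t b hb => ?_
    have : y t u = y t v := hfixed.elim (congrArg _) fun h => hy.eq_off t u h.1 v h.2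
    linarith [hb.nonpos hy.nonpos]
  have hη : 0 < 2 * c - c₁ - c₂ := by linarith
  have hupdate : ∃ᶠ t in atTop, σ t ∈ U ∧ (σ t = u ∨ σ t = v) := by
    have : u ∈ U ∨ v ∈ U := by tauto
    rcases this with hu | hv
    · exact (hσ.frequently_eq u).mono fun t ht => ⟨ht ▸ hu, .inl ht⟩
    · exact (hσ.frequently_eq v).mono fun t ht => ⟨ht ▸ hv, .inr ht⟩
  refine eventually_of_frequently_of_step hupdate ?_ (.of_forall fun t ht hQ b hb => ?_)
  · filter_upwards [h₁, h₂, hy.le_midpoint _ hη, hy.midpoint_le _ hη] with t ht₁ ht₂ hle hge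
    rintro ⟨hU, rfl | rfl⟩ b hb
    · have hv : y (t + 1) v = y t v := hy.stay t v fun _ => by grind
      have := (hge hU).walk_le (y' := -y (t + 1)) ht₁.swap ht₂.swap (congrArg _ hv) hb.swap
      simp only [Pi.neg_apply] at this
      linarith
    · have hu : y (t + 1) u = y t u := hy.stay t u fun _ => by grind
      linarith [(hle hU).walk_le ht₁ ht₂ hu hb]
  · rw [hy.stay t u (by grind), hy.stay t v (by grind)]
    exact hQ b hb

lemma antitone_limitExcess [Finite V] (hy : IsAsymptoticBalancing E U a σ y) (hσ : Fair σ) :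
    Antitone (limitExcess E a y) := by
  obtain ⟨D, hD, hbound⟩ := hy.exists_forall_walkBound
  refine antitone_of_midpoint_le_of_bddAbove (fun k => ?_)
    ⟨D, Set.forall_mem_range.2 fun k => limitExcess_le hD (hbound k)⟩
  rw [← le_div_iff₀' two_pos]
  refine le_of_forall_gt_imp_ge_of_dense fun c hc => ?_
  set δ := c - (limitExcess E a y k + limitExcess E a y (k + 2)) / 2 with hδ
  have hδpos : 0 < δ := sub_pos.2 hc
  have hcpos : 0 ≤ c := by
    linarith [limitExcess_nonneg (E := E) (a := a) (y := y) k,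
      limitExcess_nonneg (E := E) (a := a) (y := y) (k + 2)]
  exact limitExcess_le hcpos (hy.eventually_walkBound_succ hσ
    (hy.eventually_walkBound (lt_add_of_pos_right _ (half_pos hδpos)))
    (hy.eventually_walkBound (lt_add_of_pos_right _ (half_pos hδpos))) hcpos (by linarith))

lemma eventually_arc_le [Finite V] (hy : IsAsymptoticBalancing E U a σ y) (hσ : Fair σ) {ε : ℝ}
    (hε : 0 < ε) : ∀ᶠ t in atTop, ∀ u v, E u v → a u v + y t v - y t u ≤ ε := by
  have excess_lt : limitExcess E a y 1 < ε :=
    ((hy.antitone_limitExcess hσ zero_le_one).trans limitExcess_zero_le).trans_lt hε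
  filter_upwards [hy.eventually_walkBound excess_lt] with t ht u v huv
  simpa using ht u v _ ((HasWalk.nil u).snoc huv)

lemma eventually_le_root [Finite V] (hy : IsAsymptoticBalancing E U a σ y) (hσ : Fair σ) {r v : V}
    (hrv : Relation.ReflTransGen (fun u v => (E u v ∧ a u v = 0) ∨ (u ∉ U ∧ v ∉ U)) r v) :
    ∀ ε > 0, ∀ᶠ t in atTop, y t v ≤ y t r + ε := by
  induction hrv with
  | refl => exact fun ε hε => .of_forall fun t => by linarith
  | @tail u v _ huv ih =>
    intro ε hε
    rcases huv with ⟨huv, htight⟩ | ⟨hu, hv⟩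
    · filter_upwards [ih (ε / 2) (half_pos hε), hy.eventually_arc_le hσ (half_pos hε)]
        with t hut harc
      linarith [harc u v huv]
    · filter_upwards [ih ε hε] with t hut
      exact hy.eq_off t u hu v hv ▸ hut

end IsAsymptoticBalancing

lemma LeMidpoint.of_forall_le_add {E' : V → V → Prop} {x y : V → ℝ} {v : V} {m η : ℝ}
    (h : LeMidpoint E a x v m 0) (hout : ∀ w, E v w → E' v w) (hin : ∀ z, E' z v → E z v)
    (hxy : ∀ w, x w ≤ y w + η / 2) : LeMidpoint E' a y v m η := by
  obtain ⟨w, hw, hle⟩ := h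
  exact ⟨w, hout w hw, fun z hz => by linarith [hle z (hin z hz), hxy w, hxy z]⟩

namespace IsBalancingPotential

variable {p x : ℕ → V → ℝ} {ℓ : ℝ} {r : V}

open Classical in
lemma eventually_abs_sub_piecewise_le [Finite V]
    (hoff : ∀ v ∉ U, Tendsto (x · v) atTop (𝓝 ℓ)) {ε : ℝ} (hε : 0 < ε) :
    ∀ᶠ t in atTop, ∀ v, |x t v - U.piecewise (x t) (fun _ => ℓ) v| ≤ ε := by
  refine eventually_all.2 fun v => ?_
  by_cases hv : v ∈ U
  · exact .of_forall fun t => by simpa [hv] using hε.le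
  · filter_upwards [Metric.tendsto_nhds.1 (hoff v hv) ε hε] with t ht
    simpa [hv, Real.dist_eq] using ht.le

open Classical in
lemma isAsymptoticBalancing_piecewise [Finite V] (hx : IsBalancingPotential E a σ x)
    (ha : IsCriticalGauge E U a r) (hoff : ∀ v ∉ U, Tendsto (x · v) atTop (𝓝 ℓ))
    (hbdd : ∃ D, ∀ t v, |x t v| ≤ D) :
    IsAsymptoticBalancing (IncidentArc E U) U a σ fun t => U.piecewise (x t) fun _ => ℓ where
  nonpos := ha.nonpos
  bounded := by
    obtain ⟨D, hD⟩ := hbdd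
    have bound (t : ℕ) (v : V) : |U.piecewise (x t) (fun _ => ℓ) v| ≤ max D |ℓ| := by
      by_cases hv : v ∈ U <;> simp [hv, hD]
    exact ⟨max D |ℓ| + max D |ℓ|, fun t u v => by
      linarith [(abs_le.1 (bound t u)).1, (abs_le.1 (bound t v)).2]⟩
  eq_off t u hu v hv := by simp [hu, hv]
  stay t v hv := by
    by_cases hvU : v ∈ U
    · simpa [hvU] using hx.stay t v (hv hvU)
    · simp [hvU]
  le_midpoint η hη := by
    filter_upwards [eventually_abs_sub_piecewise_le hoff (half_pos hη)] with t ht hU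
    rw [Set.piecewise_eq_of_mem _ _ _ hU]
    exact (hx.le_midpoint t).of_forall_le_add (fun w hw => ⟨hw, .inl hU⟩) (fun z hz => hz.1)
      fun w => by linarith [(abs_le.1 (ht w)).2]
  midpoint_le η hη := by
    filter_upwards [eventually_abs_sub_piecewise_le hoff (half_pos hη)] with t ht hU
    rw [Set.piecewise_eq_of_mem _ _ _ hU]
    exact (hx.midpoint_le t).of_forall_le_add (fun w hw => ⟨hw, .inr hU⟩) (fun z hz => hz.1)
      fun w => by simp only [Pi.neg_apply]; linarith [(abs_le.1 (ht w)).1]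

open Classical in
lemma exists_tendsto_root [Finite V] (hx : IsBalancingPotential E a σ x) (hσ : Fair σ)
    (ha : IsCriticalGauge E U a r) (hr : r ∈ U) (hoff : ∀ v ∉ U, Tendsto (x · v) atTop (𝓝 ℓ))
    (hbdd : ∃ D, ∀ t v, |x t v| ≤ D) : ∃ L, Tendsto (x · r) atTop (𝓝 L) := by
  have hy := hx.isAsymptoticBalancing_piecewise ha hoff hbdd
  obtain ⟨D, hD⟩ := hbdd
  refine exists_tendsto_of_eventually_forall_le_add
    ⟨D, Set.forall_mem_range.2 fun t => (abs_le.1 (hD t r)).2⟩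
    ⟨-D, Set.forall_mem_range.2 fun t => (abs_le.1 (hD t r)).1⟩ fun ε hε => ?_
  have hclose := eventually_abs_sub_piecewise_le hoff (half_pos hε)
  have hroot := eventually_all.2 fun v =>
    hy.eventually_le_root hσ (ha.reachable v) (ε / 2) (half_pos hε)
  simp only [Set.piecewise_eq_of_mem _ _ _ hr] at hroot
  filter_upwards [hroot, eventually_forall_ge_atTop.2 hclose] with s hs hclose_s t ht
  refine hx.le_of_isCriticalGauge ha (fun v => ?_) (fun t ht v hv => ?_) t ht r
  · linarith [hs v, (abs_le.1 (hclose_s s le_rfl v)).2]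
  · have hv_s := hs v
    have hv_t := (abs_le.1 (hclose_s t ht v)).2
    rw [Set.piecewise_eq_of_notMem _ _ _ hv] at hv_s hv_t
    linarith

lemma exists_tendsto [Finite V] (hp : IsBalancingPotential E a σ p) (hσ : Fair σ)
    (hout : ∀ v, ∃ w, E v w) (hin : ∀ v, ∃ u, E u v)
    (hconn : ∀ u v, Relation.ReflTransGen E u v) (v : V) : ∃ L, Tendsto (p · v) atTop (𝓝 L) := by
  by_contra hv
  set U : Set V := {v | ¬∃ L, Tendsto (p · v) atTop (𝓝 L)}
  choose! P hP using fun (v : V) (hv : v ∉ U) => not_not.1 hv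
  obtain ⟨X, h, ℓ, hℓ, r, hr, hcrit⟩ :=
    exists_isCriticalGauge_of_potential hout hconn (⟨v, hv⟩ : U.Nonempty) a P
  have hx := hp.gauge X h
  obtain ⟨L, hL⟩ := hx.exists_tendsto_root hσ hcrit hr
    (fun v hv => hℓ v hv ▸ (hP v hv).sub_const (h v)) (hx.exists_forall_abs_le hout hin hconn)
  exact hr ⟨L + h r, by simpa using hL.add_const (h r)⟩

end IsBalancingPotential

end AsymptoticDynamics

section GraphFunctions

lemma equivalent_alphaR (E : V → V → Prop) (α : V → V → ℝ) (h : V → ℝ) :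
    Equivalent E α (alphaR α h) := fun k f _ => by
  have telescope : ∑ i, h (f (i + 1)) = ∑ i, h (f i) :=
    Equiv.sum_comp (Equiv.addRight (1 : ZMod (k + 1))) fun i => h (f i)
  simp only [alphaR, Finset.sum_sub_distrib, Finset.sum_add_distrib]
  linarith

/-- The cumulative amount by which each vertex has been raised after `t` balancing operations
along `σ`. -/
noncomputable def balancingPotential [DecidableEq V] (E : V → V → Prop) (α : V → V → ℝ)
    (σ : ℕ → V) : ℕ → V → ℝ
  | 0 => 0
  | t + 1 => fun u => balancingPotential E α σ t u +
      if u = σ t then (outMax E (balIter E α σ t) u - inMax E (balIter E α σ t) u) / 2 else 0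

lemma balIter_eq_alphaR [DecidableEq V] (E : V → V → Prop) (α : V → V → ℝ) (σ : ℕ → V) (t : ℕ) :
    balIter E α σ t = alphaR α (balancingPotential E α σ t) := by
  induction t with
  | zero => ext u v; simp [balIter, alphaR, balancingPotential]
  | succ t ih =>
    ext u v
    simp only [balIter, balanceAt, balancingPotential, alphaR, congrFun₂ ih u v]
    grind

variable [Finite V] {E : V → V → Prop} {v : V}

lemma isGreatest_outMax (α : V → V → ℝ) (hv : ∃ w, E v w) :
    IsGreatest {x | ∃ w, E v w ∧ x = α v w} (outMax E α v) := by
  have finite : {x | ∃ w, E v w ∧ x = α v w}.Finite :=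
    (Set.finite_range (α v)).subset fun x ⟨w, _, hx⟩ => ⟨w, hx.symm⟩
  obtain ⟨w, hw⟩ := hv
  have nonempty : {x | ∃ w, E v w ∧ x = α v w}.Nonempty := ⟨_, w, hw, rfl⟩
  exact ⟨nonempty.csSup_mem finite, fun x hx => le_csSup finite.bddAbove hx⟩

lemma continuous_outMax (hv : ∃ w, E v w) : Continuous fun α : V → V → ℝ => outMax E α v := by
  classical
  have := Fintype.ofFinite V
  have nonempty : (Finset.univ.filter (E v)).Nonempty := by simpa [Finset.Nonempty] using hv
  have outMax_eq (α : V → V → ℝ) :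
      outMax E α v = (Finset.univ.filter (E v)).sup' nonempty (α v) := by
    rw [Finset.sup'_eq_csSup_image, outMax]
    congr 1
    ext x
    simp [eq_comm]
  simp only [outMax_eq]
  exact Continuous.finset_sup'_apply nonempty fun w _ => by fun_prop

lemma continuous_inMax (hv : ∃ u, E u v) : Continuous fun α : V → V → ℝ => inMax E α v :=
  (continuous_outMax (E := Function.swap E) hv).comp
    (by fun_prop : Continuous fun α : V → V → ℝ => fun u v => α v u)

lemma leMidpoint_add_half_imbalance (α : V → V → ℝ) (p : V → ℝ) (hout : ∃ w, E v w)
    (hin : ∃ u, E u v) :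
    LeMidpoint E α p v (p v + (outMax E (alphaR α p) v - inMax E (alphaR α p) v) / 2) 0 := by
  obtain ⟨w, hw, hmax⟩ := (isGreatest_outMax (alphaR α p) hout).1
  refine ⟨w, hw, fun z hz => ?_⟩
  have hle : alphaR α p z v ≤ inMax E (alphaR α p) v :=
    (isGreatest_outMax (E := Function.swap E) (Function.swap (alphaR α p)) hin).2 ⟨z, hz, rfl⟩
  simp only [alphaR] at hle hmax ⊢
  linarith

lemma isBalancingPotential_balancingPotential [DecidableEq V] (hout : ∀ v, ∃ w, E v w)
    (hin : ∀ v, ∃ u, E u v) (α : V → V → ℝ) (σ : ℕ → V) :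
    IsBalancingPotential E α σ (balancingPotential E α σ) where
  stay t v hv := by simp [balancingPotential, hv]
  le_midpoint t := by
    simpa [balancingPotential, balIter_eq_alphaR] using
      leMidpoint_add_half_imbalance α (balancingPotential E α σ t) (hout (σ t)) (hin (σ t))
  midpoint_le t := by
    have alphaR_swap (p : V → ℝ) :
        alphaR (Function.swap α) (-p) = Function.swap (alphaR α p) := by
      ext u v
      simp only [alphaR, Function.swap, Pi.neg_apply]
      ring
    have hmid := leMidpoint_add_half_imbalance (E := Function.swap E) (Function.swap α)
      (-balancingPotential E α σ t) (hin (σ t)) (hout (σ t))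
    rw [alphaR_swap] at hmid
    convert hmid using 1
    simp only [balancingPotential, balIter_eq_alphaR, if_true, Pi.neg_apply]
    change _ = _ + (inMax E _ _ - outMax E _ _) / 2
    ring

lemma isBalancedGF_alphaR_of_tendsto [DecidableEq V] {α : V → V → ℝ} {σ : ℕ → V} {P : V → ℝ}
    (hσ : Fair σ) (hout : ∀ v, ∃ w, E v w) (hin : ∀ v, ∃ u, E u v)
    (hP : ∀ v, Tendsto (balancingPotential E α σ · v) atTop (𝓝 (P v))) :
    IsBalancedGF E (alphaR α P) := fun v => by
  have continuous_imbalance : Continuous fun p : V → ℝ =>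
      (outMax E (alphaR α p) v - inMax E (alphaR α p) v) / 2 := by
    have : Continuous (alphaR α) := by unfold alphaR; fun_prop
    exact (((continuous_outMax (hout v)).comp this).sub
      ((continuous_inMax (hin v)).comp this)).div_const 2
  have increment_tendsto : Tendsto
      (fun t => balancingPotential E α σ (t + 1) v - balancingPotential E α σ t v) atTop (𝓝 0) := by
    simpa using ((tendsto_add_atTop_iff_nat 1).2 (hP v)).sub (hP v)
  have := tendsto_nhds_unique_of_frequently_eq
    ((continuous_imbalance.tendsto P).comp (tendsto_pi_nhds.2 hP)) increment_tendsto
    ((hσ.frequently_eq v).mono fun t ht => by simp [balancingPotential, balIter_eq_alphaR, ht])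
  linarith

end GraphFunctions

/-- For any initial graph function on a strongly connected graph and
any fair infinite sequence of balancing operations, the iterates converge edgewise to
a balanced graph function equivalent to the initial one. -/
theorem fair_balancing_converges
    [Fintype V] [Nonempty V] [DecidableEq V] (E : V → V → Prop)
    (hout : ∀ v, ∃ w, E v w) (hin : ∀ v, ∃ u, E u v)
    (hconn : ∀ u v : V, Relation.ReflTransGen E u v)
    (α : V → V → ℝ) (σ : ℕ → V) (hσ : Fair σ) :
    ∃ β : V → V → ℝ, IsBalancedGF E β ∧ Equivalent E α β ∧
      ∀ u v, E u v → Tendsto (fun t => balIter E α σ t u v) atTop (nhds (β u v)) := by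
  choose P hP using fun v => (isBalancingPotential_balancingPotential hout hin α σ).exists_tendsto
    hσ hout hin hconn v
  refine ⟨alphaR α P, isBalancedGF_alphaR_of_tendsto hσ hout hin hP, equivalent_alphaR E α P,
    fun u v _ => ?_⟩
  simp only [balIter_eq_alphaR, alphaR]
  exact ((hP v).const_add (α u v)).sub (hP u)
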